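/- Let M ≥ 1, N ≥ 1, let A be a real N×N matrix with ν = ‖A‖, let h > 0 satisfy hν ≤ 1/2, and let T = (M−1)h. Let Ã_b = I_{MN} − S ⊗ I_N − h·(E ⊗ A) be the backward-Euler block matrix. If ‖(I_N − h·A)⁻¹‖ ≤ 1, then the condition number of Ã_b satisfies κ(Ã_b) = ‖Ã_b‖·‖Ã_b⁻¹‖ ≤ 2.5·(T/h + 1). -/

import Mathlib

open Matrix
open scoped Kronecker

/-- The ℓ²→ℓ² operator (spectral) norm of a matrix. -/
noncomputable def specNorm {𝕜 : Type*} [RCLike 𝕜] {n : Type*} [Fintype n] [DecidableEq n]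
    (A : Matrix n n 𝕜) : ℝ :=
  ‖LinearMap.toContinuousLinearMap (Matrix.toEuclideanLin A)‖

/-- The M×M subdiagonal shift matrix: entry (i,j) is 1 if i = j+1 and 0 otherwise. -/
def shiftMatrix (M : ℕ) : Matrix (Fin M) (Fin M) ℝ :=
  Matrix.of fun i j => if (i : ℕ) = (j : ℕ) + 1 then 1 else 0

/-- The M×M diagonal matrix with first diagonal entry 0 and all other diagonal entries 1. -/
def ediagMatrix (M : ℕ) : Matrix (Fin M) (Fin M) ℝ :=
  Matrix.of fun i j => if i = j ∧ (i : ℕ) ≠ 0 then 1 else 0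

/-!
Write `S` for the shift, `E` for `ediagMatrix M` and `R = (1 - hA)⁻¹`. The first row of `S`
vanishes, so `E S = S` and the backward-Euler matrix factors as `D (1 - S ⊗ R)`, where
`D = (1 - E) ⊗ 1 + E ⊗ (1 - hA)` is block diagonal. Now `S ⊗ R` is a contraction whose `M`-th power
vanishes, so `(1 - S ⊗ R)⁻¹` is a geometric sum of `M` contractions, and
`D⁻¹ = (1 - E) ⊗ 1 + E ⊗ R` is a contraction too; hence the inverse has norm at most `M`. The
triangle inequality bounds the norm of the matrix itself.
-/

section GeometricSum

variable {R : Type*} [SeminormedRing R] {x : R}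

lemma norm_pow_le_one_of_norm_le_one (h1 : ‖(1 : R)‖ ≤ 1) (hx : ‖x‖ ≤ 1) (k : ℕ) :
    ‖x ^ k‖ ≤ 1 := by
  induction k with
  | zero => simpa only [pow_zero] using h1
  | succ k ih =>
    rw [pow_succ]
    exact (norm_mul_le _ _).trans (mul_le_one₀ ih (norm_nonneg _) hx)

lemma norm_geom_sum_le_of_norm_le_one (h1 : ‖(1 : R)‖ ≤ 1) (hx : ‖x‖ ≤ 1) (m : ℕ) :
    ‖∑ k ∈ Finset.range m, x ^ k‖ ≤ m := by
  simpa using norm_sum_le_of_le (Finset.range m)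
    fun k _ ↦ norm_pow_le_one_of_norm_le_one h1 hx k

end GeometricSum

section Kronecker

variable {α m n : Type*} [DecidableEq m] [DecidableEq n]

lemma kronecker_pow [CommSemiring α] [Fintype m] [Fintype n] (A : Matrix m m α)
    (B : Matrix n n α) (k : ℕ) : (A ⊗ₖ B) ^ k = (A ^ k) ⊗ₖ (B ^ k) := by
  induction k with
  | zero => simp only [pow_zero, one_kronecker_one]
  | succ k ih => rw [pow_succ, ih, ← mul_kronecker_mul, ← pow_succ, ← pow_succ]

variable [CommRing α]

/-- For an idempotent `P`, the matrix acting as `1 ⊗ B` on the range of `P ⊗ 1` and as the identity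
on its kernel. -/
def actOnRange (P : Matrix m m α) (B : Matrix n n α) : Matrix (m × n) (m × n) α :=
  (1 - P) ⊗ₖ 1 + P ⊗ₖ B

lemma actOnRange_one_sub (P : Matrix m m α) (B : Matrix n n α) :
    actOnRange P (1 - B) = 1 - P ⊗ₖ B := by
  rw [← one_kronecker_one]
  ext
  simp only [actOnRange, Matrix.add_apply, Matrix.sub_apply, kroneckerMap_apply]
  ring

lemma actOnRange_one (P : Matrix m m α) : actOnRange P (1 : Matrix n n α) = 1 := by
  rw [actOnRange, ← add_kronecker, sub_add_cancel, one_kronecker_one]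

lemma actOnRange_diagonal (d : m → α) (B : Matrix n n α) :
    actOnRange (diagonal d) B = reindex (Equiv.prodComm _ _) (Equiv.prodComm _ _)
      (blockDiagonal fun i ↦ (1 - d i) • (1 : Matrix n n α) + d i • B) := by
  have hcompl : 1 - diagonal d = diagonal fun i ↦ 1 - d i := by
    rw [← diagonal_one, diagonal_sub]
  rw [actOnRange, hcompl, diagonal_kronecker, diagonal_kronecker]
  ext ⟨i, a⟩ ⟨j, b⟩
  by_cases hij : i = j <;> simp [blockDiagonal_apply, hij]

variable [Fintype m] [Fintype n]

lemma actOnRange_mul_kronecker {P X : Matrix m m α} (hPX : P * X = X) (B C : Matrix n n α) :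
    actOnRange P B * X ⊗ₖ C = X ⊗ₖ (B * C) := by
  rw [actOnRange, add_mul, ← mul_kronecker_mul, ← mul_kronecker_mul, sub_mul, hPX, one_mul,
    sub_self, zero_kronecker, zero_add]

lemma actOnRange_mul_actOnRange {P : Matrix m m α} (hP : IsIdempotentElem P)
    (B C : Matrix n n α) : actOnRange P B * actOnRange P C = actOnRange P (B * C) := by
  have hcompl : actOnRange P B * (1 - P) ⊗ₖ 1 = (1 - P) ⊗ₖ (1 : Matrix n n α) := by
    rw [actOnRange, add_mul, ← mul_kronecker_mul, ← mul_kronecker_mul, hP.one_sub.eq,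
      hP.mul_one_sub_self, zero_kronecker, add_zero, one_mul]
  rw [actOnRange.eq_def P C, mul_add, hcompl, actOnRange_mul_kronecker hP.eq, actOnRange]

end Kronecker

section L2OpNorm

open scoped Matrix.Norms.L2Operator

variable {𝕜 m n : Type*} [RCLike 𝕜] [Fintype m] [Fintype n] [DecidableEq n]

lemma specNorm_eq_l2_opNorm (A : Matrix n n 𝕜) : specNorm A = ‖A‖ := rfl

lemma isUnit_one_sub_smul_of_norm_mul_specNorm_lt_one {c : 𝕜} {A : Matrix n n 𝕜}
    (hA : ‖c‖ * specNorm A < 1) : IsUnit (1 - c • A) := by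
  refine isUnit_one_sub_of_norm_lt_one ?_
  rwa [norm_smul, ← specNorm_eq_l2_opNorm]

lemma l2_opNorm_le_iff {A : Matrix m n 𝕜} {c : ℝ} (hc : 0 ≤ c) :
    ‖A‖ ≤ c ↔ ∀ x : n → 𝕜, ∑ i, ‖(A *ᵥ x) i‖ ^ 2 ≤ c ^ 2 * ∑ j, ‖x j‖ ^ 2 := by
  have hsq (x : EuclideanSpace 𝕜 n) : ‖toEuclideanLin A x‖ ≤ c * ‖x‖ ↔
      ∑ i, ‖(A *ᵥ x.ofLp) i‖ ^ 2 ≤ c ^ 2 * ∑ j, ‖x j‖ ^ 2 := by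
    rw [← sq_le_sq₀ (norm_nonneg _) (by positivity), mul_pow, EuclideanSpace.norm_sq_eq,
      EuclideanSpace.norm_sq_eq]
    rfl
  rw [l2_opNorm_def, ContinuousLinearMap.opNorm_le_iff hc]
  exact ⟨fun h x ↦ (hsq (WithLp.toLp 2 x)).1 (h _), fun h x ↦ (hsq x).2 (h _)⟩

lemma l2_opNorm_one_le : ‖(1 : Matrix n n 𝕜)‖ ≤ 1 :=
  (l2_opNorm_le_iff zero_le_one).2 (by simp)

lemma l2_opNorm_blockDiagonal_le {o : Type*} [Fintype o] [DecidableEq o]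
    {D : o → Matrix m n 𝕜} {c : ℝ} (hc : 0 ≤ c) (hD : ∀ k, ‖D k‖ ≤ c) :
    ‖blockDiagonal D‖ ≤ c := by
  refine (l2_opNorm_le_iff hc).2 fun x ↦ ?_
  have hblock (i : m) (k : o) : (blockDiagonal D *ᵥ x) (i, k) = (D k *ᵥ fun j ↦ x (j, k)) i := by
    simp [mulVec, dotProduct, Fintype.sum_prod_type, blockDiagonal_apply]
  simp only [Fintype.sum_prod_type_right, hblock, Finset.mul_sum]
  gcongr with k
  simpa only [Finset.mul_sum] using (l2_opNorm_le_iff hc).1 (hD k) fun j ↦ x (j, k)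

lemma l2_opNorm_reindex_le {m' n' : Type*} [Fintype m'] [Fintype n'] [DecidableEq n']
    (e : m ≃ m') (f : n ≃ n') (A : Matrix m n 𝕜) : ‖reindex e f A‖ ≤ ‖A‖ := by
  refine (l2_opNorm_le_iff (norm_nonneg A)).2 fun x ↦ ?_
  rw [reindex_apply, submatrix_mulVec_equiv, Equiv.symm_symm, ← f.sum_comp (‖x ·‖ ^ 2)]
  exact (e.symm.sum_comp (‖(A *ᵥ (x ∘ f)) ·‖ ^ 2)).trans_le
    ((l2_opNorm_le_iff (norm_nonneg A)).1 le_rfl _)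

variable [DecidableEq m]

lemma l2_opNorm_kronecker_le {l p : Type*} [Fintype l] [Fintype p]
    (A : Matrix l m 𝕜) (B : Matrix p n 𝕜) : ‖A ⊗ₖ B‖ ≤ ‖A‖ * ‖B‖ := by
  classical
  have hA : ‖A ⊗ₖ (1 : Matrix p p 𝕜)‖ ≤ ‖A‖ := by
    rw [kronecker_one]
    exact l2_opNorm_blockDiagonal_le (norm_nonneg A) fun _ ↦ le_rfl
  have hB : ‖(1 : Matrix m m 𝕜) ⊗ₖ B‖ ≤ ‖B‖ := by
    rw [one_kronecker]
    exact (l2_opNorm_reindex_le _ _ _).trans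
      (l2_opNorm_blockDiagonal_le (norm_nonneg B) fun _ ↦ le_rfl)
  calc ‖A ⊗ₖ B‖ = ‖A ⊗ₖ (1 : Matrix p p 𝕜) * (1 : Matrix m m 𝕜) ⊗ₖ B‖ := by
        rw [← mul_kronecker_mul, Matrix.mul_one, Matrix.one_mul]
    _ ≤ ‖A ⊗ₖ (1 : Matrix p p 𝕜)‖ * ‖(1 : Matrix m m 𝕜) ⊗ₖ B‖ := l2_opNorm_mul _ _
    _ ≤ ‖A‖ * ‖B‖ := by gcongr

lemma l2_opNorm_actOnRange_diagonal_le_one {d : m → ℝ} (hd : ∀ i, d i ∈ Set.Icc 0 1)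
    {B : Matrix n n ℝ} (hB : ‖B‖ ≤ 1) : ‖actOnRange (diagonal d) B‖ ≤ 1 := by
  rw [actOnRange_diagonal]
  refine (l2_opNorm_reindex_le _ _ _).trans (l2_opNorm_blockDiagonal_le zero_le_one fun i ↦ ?_)
  have hball := convex_closedBall (0 : Matrix n n ℝ) 1
    (mem_closedBall_zero_iff.2 l2_opNorm_one_le) (mem_closedBall_zero_iff.2 hB)
    (sub_nonneg.2 (hd i).2) (hd i).1 (sub_add_cancel _ _)
  exact mem_closedBall_zero_iff.1 hball

end L2OpNorm

section Shift

open scoped Matrix.Norms.L2Operator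

variable (M : ℕ)

lemma ediagMatrix_eq_diagonal :
    ediagMatrix M = diagonal fun i : Fin M ↦ if (i : ℕ) = 0 then (0 : ℝ) else 1 := by
  ext i j
  by_cases hij : i = j <;> simp [ediagMatrix, hij]

lemma isIdempotentElem_ediagMatrix : IsIdempotentElem (ediagMatrix M) := by
  simp [IsIdempotentElem, ediagMatrix_eq_diagonal]

lemma ediagMatrix_mul_shiftMatrix : ediagMatrix M * shiftMatrix M = shiftMatrix M := by
  ext i j
  rw [ediagMatrix_eq_diagonal, diagonal_mul]
  by_cases hi : (i : ℕ) = 0 <;> simp [shiftMatrix, hi]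

lemma l2_opNorm_ediagMatrix_le_one : ‖ediagMatrix M‖ ≤ 1 := by
  rw [ediagMatrix_eq_diagonal, l2_opNorm_diagonal, pi_norm_le_iff_of_nonneg zero_le_one]
  intro i
  split_ifs <;> simp

lemma conjTranspose_shiftMatrix_mul_self :
    (shiftMatrix M)ᴴ * shiftMatrix M =
      diagonal fun j : Fin M ↦ if (j : ℕ) + 1 < M then (1 : ℝ) else 0 := by
  ext j k
  simp only [mul_apply, conjTranspose_apply, star_trivial, shiftMatrix, of_apply, diagonal_apply]
  by_cases hj : (j : ℕ) + 1 < M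
  · rw [Finset.sum_eq_single ⟨j + 1, hj⟩ (fun i _ hi ↦ by grind) (by simp)]
    grind
  · exact (Finset.sum_eq_zero fun i _ ↦ by grind).trans (by grind)

lemma l2_opNorm_shiftMatrix_le_one : ‖shiftMatrix M‖ ≤ 1 := by
  have hsq : ‖shiftMatrix M‖ * ‖shiftMatrix M‖ ≤ 1 := by
    rw [← l2_opNorm_conjTranspose_mul_self, conjTranspose_shiftMatrix_mul_self,
      l2_opNorm_diagonal, pi_norm_le_iff_of_nonneg zero_le_one]
    intro i
    split_ifs <;> simp
  exact (le_abs_self _).trans (abs_le_one_iff_mul_self_le_one.2 hsq)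

lemma shiftMatrix_pow_apply_eq_zero (k : ℕ) {i j : Fin M} (hij : (i : ℕ) < j + k) :
    (shiftMatrix M ^ k) i j = 0 := by
  induction k generalizing i with
  | zero => exact one_apply_ne (by grind)
  | succ k ih =>
    rw [pow_succ', mul_apply]
    refine Finset.sum_eq_zero fun l _ ↦ ?_
    by_cases hil : (i : ℕ) = l + 1
    · rw [ih (by lia), mul_zero]
    · simp [shiftMatrix, hil]

lemma shiftMatrix_pow_self : shiftMatrix M ^ M = 0 := by
  ext i j
  exact shiftMatrix_pow_apply_eq_zero M M (by lia)

end Shift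

section BackwardEuler

open scoped Matrix.Norms.L2Operator

variable {n : Type*} [Fintype n] [DecidableEq n] (M : ℕ) (A : Matrix n n ℝ) (h : ℝ)

/-- The matrix of the linear system solved by `M - 1` backward-Euler steps of size `h` for
`dx/dt = A x`, whose `k`-th block row reads `x₀ = b₀` or `(1 - h A) xₖ - xₖ₋₁ = bₖ`. -/
def backwardEulerMatrix : Matrix (Fin M × n) (Fin M × n) ℝ :=
  1 - shiftMatrix M ⊗ₖ (1 : Matrix n n ℝ) - h • (ediagMatrix M ⊗ₖ A)

lemma l2_opNorm_backwardEulerMatrix_le : ‖backwardEulerMatrix M A h‖ ≤ 2 + |h| * ‖A‖ := by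
  have hshift : ‖shiftMatrix M ⊗ₖ (1 : Matrix n n ℝ)‖ ≤ 1 :=
    (l2_opNorm_kronecker_le _ _).trans
      (mul_le_one₀ (l2_opNorm_shiftMatrix_le_one M) (norm_nonneg _) l2_opNorm_one_le)
  have hediag : ‖ediagMatrix M ⊗ₖ A‖ ≤ ‖A‖ :=
    (l2_opNorm_kronecker_le _ _).trans
      (mul_le_of_le_one_left (norm_nonneg _) (l2_opNorm_ediagMatrix_le_one M))
  calc ‖backwardEulerMatrix M A h‖
      ≤ ‖(1 : Matrix (Fin M × n) (Fin M × n) ℝ)‖ + ‖shiftMatrix M ⊗ₖ (1 : Matrix n n ℝ)‖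
          + ‖h • (ediagMatrix M ⊗ₖ A)‖ :=
        (norm_sub_le _ _).trans (add_le_add_left (norm_sub_le _ _) _)
    _ ≤ 1 + 1 + |h| * ‖A‖ := by
        rw [norm_smul, Real.norm_eq_abs]
        gcongr
        exact l2_opNorm_one_le
    _ = 2 + |h| * ‖A‖ := by ring

variable {A h} {R : Matrix n n ℝ}

lemma backwardEulerMatrix_eq_mul (hR : (1 - h • A) * R = 1) :
    backwardEulerMatrix M A h =
      actOnRange (ediagMatrix M) (1 - h • A) * (1 - shiftMatrix M ⊗ₖ R) := by
  rw [mul_sub, mul_one, actOnRange_mul_kronecker (ediagMatrix_mul_shiftMatrix M), hR,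
    actOnRange_one_sub, kronecker_smul, backwardEulerMatrix, sub_right_comm]

lemma inv_backwardEulerMatrix (hR : (1 - h • A) * R = 1) :
    (backwardEulerMatrix M A h)⁻¹ =
      (∑ k ∈ Finset.range M, (shiftMatrix M ⊗ₖ R) ^ k) * actOnRange (ediagMatrix M) R := by
  have hnil : (shiftMatrix M ⊗ₖ R) ^ M = 0 := by
    rw [kronecker_pow, shiftMatrix_pow_self, zero_kronecker]
  refine inv_eq_right_inv ?_
  rw [backwardEulerMatrix_eq_mul M hR, mul_assoc, ← mul_assoc (1 - _), mul_neg_geom_sum, hnil,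
    sub_zero, one_mul, actOnRange_mul_actOnRange (isIdempotentElem_ediagMatrix M), hR,
    actOnRange_one]

lemma l2_opNorm_inv_backwardEulerMatrix_le (hA : IsUnit (1 - h • A))
    (hinv : ‖(1 - h • A)⁻¹‖ ≤ 1) : ‖(backwardEulerMatrix M A h)⁻¹‖ ≤ M := by
  have hstep : ‖shiftMatrix M ⊗ₖ (1 - h • A)⁻¹‖ ≤ 1 :=
    (l2_opNorm_kronecker_le _ _).trans
      (mul_le_one₀ (l2_opNorm_shiftMatrix_le_one M) (norm_nonneg _) hinv)
  have hdiag : ‖actOnRange (ediagMatrix M) (1 - h • A)⁻¹‖ ≤ 1 := by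
    rw [ediagMatrix_eq_diagonal]
    exact l2_opNorm_actOnRange_diagonal_le_one (fun i ↦ by split_ifs <;> simp) hinv
  rw [inv_backwardEulerMatrix M (mul_nonsing_inv _ ((isUnit_iff_isUnit_det _).1 hA))]
  calc _ ≤ (M : ℝ) * 1 :=
        norm_mul_le_of_le (norm_geom_sum_le_of_norm_le_one l2_opNorm_one_le hstep M) hdiag
    _ = M := mul_one _

end BackwardEuler

theorem stmt16_general {n : Type*} [Fintype n] [DecidableEq n] (M : ℕ) {A : Matrix n n ℝ} {h : ℝ}
    (hA : IsUnit (1 - h • A)) (hinv : specNorm (1 - h • A)⁻¹ ≤ 1) :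
    specNorm (backwardEulerMatrix M A h) * specNorm (backwardEulerMatrix M A h)⁻¹ ≤
      (2 + |h| * specNorm A) * M :=
  mul_le_mul (l2_opNorm_backwardEulerMatrix_le M A h)
    (l2_opNorm_inv_backwardEulerMatrix_le M hA hinv) (norm_nonneg _)
    (add_nonneg zero_le_two (mul_nonneg (abs_nonneg h) (norm_nonneg _)))

theorem stmt16 {M N : ℕ} (hM : 1 ≤ M) (hN : 1 ≤ N)
    (A : Matrix (Fin N) (Fin N) ℝ) (ν : ℝ) (hν : ν = specNorm A)
    (h : ℝ) (hh : 0 < h) (hhν : h * ν ≤ 1 / 2)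
    (T : ℝ) (hT : T = ((M : ℝ) - 1) * h)
    (hBinv : specNorm ((1 : Matrix (Fin N) (Fin N) ℝ) - h • A)⁻¹ ≤ 1) :
    specNorm ((1 : Matrix (Fin M × Fin N) (Fin M × Fin N) ℝ)
        - shiftMatrix M ⊗ₖ (1 : Matrix (Fin N) (Fin N) ℝ)
        - h • (ediagMatrix M ⊗ₖ A)) *
      specNorm ((1 : Matrix (Fin M × Fin N) (Fin M × Fin N) ℝ)
        - shiftMatrix M ⊗ₖ (1 : Matrix (Fin N) (Fin N) ℝ)
        - h • (ediagMatrix M ⊗ₖ A))⁻¹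
      ≤ 2.5 * (T / h + 1) := by
  subst hν hT
  have hhA : |h| * specNorm A ≤ 1 / 2 := by rwa [abs_of_pos hh]
  have hunit : IsUnit (1 - h • A) :=
    isUnit_one_sub_smul_of_norm_mul_specNorm_lt_one (hhA.trans_lt (by norm_num))
  have hsteps : ((M : ℝ) - 1) * h / h + 1 = M := by
    rw [mul_div_cancel_right₀ _ hh.ne', sub_add_cancel]
  rw [hsteps]
  refine (stmt16_general M hunit hBinv).trans ?_
  gcongr
  linarith
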